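/- (Weak Freud–Levin Theorem) Suppose x₀ ∈ supp(μ) satisfies: for all δ > 0, both (x₀ − δ, x₀) ∩ supp(μ) and (x₀, x₀ + δ) ∩ supp(μ) are nonempty; w(x₀) > 0; the quantities ρ_n = (1/n) w(x₀) K_n(x₀, x₀) satisfy 0 < inf_n ρ_n ≤ sup_n ρ_n < ∞; and weak bulk universality holds at x₀, i.e., uniformly for a, b in compact subsets of ℝ, K_n(x₀ + a/(n ρ_n), x₀ + b/(n ρ_n))/K_n(x₀, x₀) → sin(π(b−a))/(π(b−a)). For each n, the zeros of p_n are real and simple; label those near x₀ as … < x_{−1}^{(n)} < x₀ ≤ x_0^{(n)} < x_1^{(n)} < … (so x_j^{(n)} for j ≥ 0 are the successive zeros of p_n that are ≥ x₀, and x_j^{(n)} for j < 0 the successive zeros < x₀). Then for each fixed j ∈ ℤ, x_j^{(n)} is defined for all sufficiently large n and lim_{n→∞} (x_{j+1}^{(n)} − x_j^{(n)})/(x_1^{(n)} − x_0^{(n)}) = 1 (quasi-clock behavior at x₀). -/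

import Mathlib

open MeasureTheory Filter Set

/-- The Christoffel–Darboux kernel `K_n(x, y) = Σ_{j=0}^n p_j(x) p_j(y)` (for real arguments,
the orthonormal polynomials being real). -/
noncomputable def CDKernel (p : ℕ → Polynomial ℝ) (n : ℕ) (x y : ℝ) : ℝ :=
  ∑ j ∈ Finset.range (n + 1), (p j).eval x * (p j).eval y

/-- The (topological) support of a measure on `ℝ`: points all of whose neighborhoods have
positive measure. -/
def measSupport (μ : Measure ℝ) : Set ℝ := {x : ℝ | ∀ U ∈ nhds x, μ U ≠ 0}

/-- `y` is the `j`-th zero of `P` relative to `x₀` (zeros assumed real and simple): for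
`j ≥ 0`, `y` is a root with `x₀ ≤ y` and exactly `j` roots lie in `[x₀, y)`; for `j < 0`, `y`
is a root with `y < x₀` and exactly `-(j+1)` roots lie in `(y, x₀)`.  This encodes the
labeling `… < x_{-1}^{(n)} < x₀ ≤ x_0^{(n)} < x_1^{(n)} < …` of the zeros near `x₀`. -/
def IsNthZero (P : Polynomial ℝ) (x₀ : ℝ) (j : ℤ) (y : ℝ) : Prop :=
  P.IsRoot y ∧
    (if 0 ≤ j then
      x₀ ≤ y ∧ (Set.ncard {t : ℝ | P.IsRoot t ∧ x₀ ≤ t ∧ t < y} : ℤ) = j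
    else
      y < x₀ ∧ (Set.ncard {t : ℝ | P.IsRoot t ∧ y < t ∧ t < x₀} : ℤ) = -(j + 1))

/-! If `a` is a zero of `p n`, the Christoffel–Darboux formula makes the zeros of `K_n(a, ·)`
exactly the other zeros of `p n`. Universality says that `K_n(a, a + u / s) / K_n(x₀, x₀)` is close
to `sin (π u) / (π u)`, which is positive for `|u| < 1` and changes sign at `u = ±1`. Hence
consecutive zeros near `x₀` are at distance `(1 + o(1)) / s`, where `s = n ρ_n`. -/

section MomentFunctional

open Polynomial

variable {K : Type*} [Field K]

/-- The sequence `S` (with `deg (S n) = n`) is orthonormal for the symmetric bilinear form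
`(q, r) ↦ L (q * r)` attached to the moment functional `L`. -/
def IsOrthonormalSequence (L : K[X] →ₗ[K] K) (S : Sequence K) : Prop :=
  ∀ n m, L (S n * S m) = if n = m then 1 else 0

/-- The diagonal entry in row `n` (counted from `0`) of the Jacobi matrix of the orthonormal
sequence `S` of `L`. -/
noncomputable def jacobiDiag (L : K[X] →ₗ[K] K) (S : Sequence K) (n : ℕ) : K :=
  L (X * S n * S n)

/-- The entry in row `n` and column `n + 1` (counted from `0`) of the Jacobi matrix of the
orthonormal sequence `S` of `L`. -/
noncomputable def jacobiOffDiag (L : K[X] →ₗ[K] K) (S : Sequence K) (n : ℕ) : K :=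
  L (X * S n * S (n + 1))

lemma degree_X_mul_sequence (S : Sequence K) (n : ℕ) : (X * S n).degree = ↑(n + 1) := by
  rw [degree_mul, degree_X, S.degree_eq]
  push_cast
  exact add_comm _ _

namespace IsOrthonormalSequence

variable {L : K[X] →ₗ[K] K} {S : Sequence K} (hS : IsOrthonormalSequence L S)
include hS

lemma eq_sum_smul {q : K[X]} {m : ℕ} (hq : q.degree < m) :
    q = ∑ j ∈ Finset.range m, L (q * S j) • S j := by
  have hmem : q ∈ Submodule.span K (S '' Iio m) := by
    rw [S.span_degreeLT fun i _ => (leadingCoeff_ne_zero.2 (S.ne_zero i)).isUnit]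
    exact mem_degreeLT.2 hq
  clear hq
  induction hmem using Submodule.span_induction with
  | mem q hq =>
    obtain ⟨i, hi, rfl⟩ := hq
    simp [hS i, mem_Iio.1 hi]
  | zero => simp
  | add q r _ _ hq hr =>
    simp only [add_mul, map_add, add_smul, Finset.sum_add_distrib, ← hq, ← hr]
  | smul c q _ hq =>
    simp only [smul_mul_assoc, map_smul, smul_assoc, ← Finset.smul_sum, ← hq]

lemma map_mul_eq_zero_of_degree_lt {q : K[X]} {k : ℕ} (hq : q.degree < k) : L (q * S k) = 0 := by
  rw [hS.eq_sum_smul hq, Finset.sum_mul, map_sum]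
  refine Finset.sum_eq_zero fun j hj => ?_
  rw [smul_mul_assoc, map_smul, hS, if_neg (Finset.mem_range.1 hj).ne, smul_zero]

lemma X_mul_eq_sum_smul (n : ℕ) :
    X * S n = ∑ j ∈ Finset.range (n + 2), L (X * S n * S j) • S j :=
  hS.eq_sum_smul (by rw [degree_X_mul_sequence]; exact_mod_cast Nat.lt_succ_self _)

lemma X_mul_zero : X * S 0 = jacobiOffDiag L S 0 • S 1 + jacobiDiag L S 0 • S 0 := by
  rw [hS.X_mul_eq_sum_smul 0, Finset.sum_range_succ, Finset.sum_range_one, add_comm]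
  rfl

/-- Since multiplication by `X` is symmetric for the form, `L (X * S (n + 1) * S j)` vanishes for
`j < n`, where `X * S j` has degree less than `n + 1`. -/
lemma X_mul_succ (n : ℕ) :
    X * S (n + 1) = jacobiOffDiag L S (n + 1) • S (n + 2) + jacobiDiag L S (n + 1) • S (n + 1) +
      jacobiOffDiag L S n • S n := by
  have hsymm (j : ℕ) : L (X * S (n + 1) * S j) = L (X * S j * S (n + 1)) := by
    rw [mul_right_comm]
  have hlow : ∑ j ∈ Finset.range n, L (X * S (n + 1) * S j) • S j = 0 := by
    refine Finset.sum_eq_zero fun j hj => ?_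
    rw [hsymm, hS.map_mul_eq_zero_of_degree_lt, zero_smul]
    rw [degree_X_mul_sequence]
    exact_mod_cast Nat.succ_lt_succ (Finset.mem_range.1 hj)
  rw [hS.X_mul_eq_sum_smul, Finset.sum_range_succ, Finset.sum_range_succ, Finset.sum_range_succ,
    hlow, hsymm n, jacobiOffDiag, jacobiDiag, jacobiOffDiag]
  abel

lemma jacobiOffDiag_ne_zero (n : ℕ) : jacobiOffDiag L S n ≠ 0 := by
  intro h
  have hmem : X * S n ∈ degreeLT K (n + 1) := by
    rw [hS.X_mul_eq_sum_smul, Finset.sum_range_succ]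
    change _ + jacobiOffDiag L S n • _ ∈ _
    rw [h, zero_smul, add_zero]
    refine sum_mem fun j hj => Submodule.smul_mem _ _ (mem_degreeLT.2 ?_)
    rw [S.degree_eq]
    exact_mod_cast Finset.mem_range.1 hj
  exact (degree_X_mul_sequence S n ▸ mem_degreeLT.1 hmem).false

end IsOrthonormalSequence

end MomentFunctional

section ChristoffelDarboux

open Polynomial

lemma continuous_CDKernel (p : ℕ → ℝ[X]) (n : ℕ) (x : ℝ) : Continuous (CDKernel p n x) := by
  unfold CDKernel
  fun_prop

lemma CDKernel_self_pos (S : Sequence ℝ) (n : ℕ) (x : ℝ) : 0 < CDKernel S n x x := by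
  refine Finset.sum_pos' (fun j _ => mul_self_nonneg _) ⟨0, by simp, mul_self_pos.2 ?_⟩
  obtain ⟨d, hd⟩ := natDegree_eq_zero.1 (S.natDegree_eq 0)
  rw [← hd, eval_C]
  rintro rfl
  exact S.ne_zero 0 (by rw [← hd, C_0])

namespace IsOrthonormalSequence

variable {L : ℝ[X] →ₗ[ℝ] ℝ} {S : Sequence ℝ} (hS : IsOrthonormalSequence L S)
include hS

theorem christoffel_darboux (n : ℕ) (x y : ℝ) :
    CDKernel S n x y * (x - y) = jacobiOffDiag L S n *
      ((S (n + 1)).eval x * (S n).eval y - (S n).eval x * (S (n + 1)).eval y) := by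
  induction n with
  | zero =>
    have h (t : ℝ) := congrArg (eval t) hS.X_mul_zero
    simp only [eval_mul, eval_add, eval_smul, eval_X, smul_eq_mul] at h
    simp only [CDKernel, zero_add, Finset.sum_range_one]
    linear_combination (S 0).eval y * h x - (S 0).eval x * h y
  | succ n ih =>
    have h (t : ℝ) := congrArg (eval t) (hS.X_mul_succ n)
    simp only [eval_mul, eval_add, eval_smul, eval_X, smul_eq_mul] at h
    rw [CDKernel, Finset.sum_range_succ, ← CDKernel]
    linear_combination ih + (S (n + 1)).eval y * h x - (S (n + 1)).eval x * h y

theorem christoffel_darboux_self (n : ℕ) (x : ℝ) :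
    CDKernel S n x x = jacobiOffDiag L S n *
      ((S (n + 1)).derivative.eval x * (S n).eval x -
        (S n).derivative.eval x * (S (n + 1)).eval x) := by
  have hpoly : (∑ j ∈ Finset.range (n + 1), C ((S j).eval x) * S j) * (C x - X) =
      C (jacobiOffDiag L S n) *
        (C ((S (n + 1)).eval x) * S n - C ((S n).eval x) * S (n + 1)) := by
    refine Polynomial.funext fun y => ?_
    simpa [CDKernel, eval_finsetSum] using hS.christoffel_darboux n x y
  have hderiv := congrArg (fun q => eval x (derivative q)) hpoly
  simp only [derivative_mul, derivative_sub, derivative_C, derivative_X, eval_add, eval_mul,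
    eval_sub, eval_neg, eval_finsetSum, eval_C, eval_X, sub_self, mul_zero, zero_mul,
    zero_add, zero_sub, mul_neg, mul_one] at hderiv
  rw [CDKernel]
  linear_combination -hderiv

lemma CDKernel_eq_zero_iff {n : ℕ} {x : ℝ} (hx : (S n).IsRoot x) (y : ℝ) :
    CDKernel S n x y = 0 ↔ (S n).IsRoot y ∧ y ≠ x := by
  have hself := CDKernel_self_pos S n x
  have hCD := hS.christoffel_darboux n x y
  have hne : (S (n + 1)).eval x ≠ 0 := by
    intro h
    rw [hS.christoffel_darboux_self, h, hx.eq_zero] at hself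
    simp at hself
  rw [hx.eq_zero, zero_mul, sub_zero] at hCD
  constructor
  · intro hxy
    refine ⟨?_, ?_⟩
    · simpa [hxy, hS.jacobiOffDiag_ne_zero n, hne] using hCD
    · rintro rfl
      exact hself.ne' hxy
  · rintro ⟨hy, hyx⟩
    simpa [hy.eq_zero, sub_eq_zero, hyx.symm] using hCD

/-- The quotient `S (n + 1) / S n` has derivative `K_n(z, z) / (a_n * S n ^ 2)` with
`a_n = jacobiOffDiag L S n`, which never vanishes, while `K_n(x, y) = 0` forces it to take equal
values at `x` and `y`. -/
lemma exists_isRoot_of_CDKernel_eq_zero {n : ℕ} {x y : ℝ} (hxy : x < y)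
    (h : CDKernel S n x y = 0) : ∃ z ∈ Icc x y, (S n).IsRoot z := by
  by_contra! hne
  replace hne : ∀ z ∈ Icc x y, (S n).eval z ≠ 0 := hne
  have hends : (S (n + 1)).eval x / (S n).eval x = (S (n + 1)).eval y / (S n).eval y := by
    have hCD := hS.christoffel_darboux n x y
    rw [h, zero_mul, eq_comm, mul_eq_zero_iff_left (hS.jacobiOffDiag_ne_zero n)] at hCD
    rw [div_eq_div_iff (hne x (left_mem_Icc.2 hxy.le)) (hne y (right_mem_Icc.2 hxy.le))]
    linear_combination hCD
  obtain ⟨z, hz, hderiv⟩ := exists_hasDerivAt_eq_zero hxy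
    ((S (n + 1)).continuousOn.div (S n).continuousOn hne) hends fun z hz =>
      ((S (n + 1)).hasDerivAt z).div ((S n).hasDerivAt z) (hne z (Ioo_subset_Icc_self hz))
  rw [div_eq_zero_iff, or_iff_left (pow_ne_zero 2 (hne z (Ioo_subset_Icc_self hz)))] at hderiv
  have hself := hS.christoffel_darboux_self n z
  rw [mul_comm ((S n).derivative.eval z), hderiv, mul_zero] at hself
  exact (CDKernel_self_pos S n z).ne' hself

end IsOrthonormalSequence

end ChristoffelDarboux

section Sinc

lemma sinc_pi_mul_pos {u : ℝ} (hu : |u| < 1) : 0 < Real.sinc (Real.pi * u) := by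
  wlog hu0 : 0 ≤ u generalizing u
  · rw [← Real.sinc_neg, ← mul_neg]
    exact this (by rwa [abs_neg]) (by linarith)
  rcases hu0.eq_or_lt with rfl | hu0
  · simp
  have hpos : 0 < Real.pi * u := by positivity
  rw [Real.sinc_of_ne_zero hpos.ne']
  refine div_pos (Real.sin_pos_of_pos_of_lt_pi hpos ?_) hpos
  exact mul_lt_of_lt_one_right Real.pi_pos ((le_abs_self u).trans_lt hu)

lemma sinc_pi_mul_one_add_neg {ε : ℝ} (hε₀ : 0 < ε) (hε₁ : ε < 1) :
    Real.sinc (Real.pi * (1 + ε)) < 0 := by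
  have hpos : 0 < Real.pi * (1 + ε) := by positivity
  rw [Real.sinc_of_ne_zero hpos.ne', mul_one_add, add_comm, Real.sin_add_pi]
  refine div_neg_of_neg_of_pos (neg_lt_zero.2 (Real.sin_pos_of_pos_of_lt_pi (by positivity) ?_))
    (by positivity)
  exact mul_lt_of_lt_one_right Real.pi_pos hε₁

lemma exists_sinc_gap {ε : ℝ} (hε₀ : 0 < ε) (hε₁ : ε < 1) :
    ∃ η > 0, (∀ u, |u| ≤ 1 - ε → η ≤ Real.sinc (Real.pi * u)) ∧
      Real.sinc (Real.pi * (1 + ε)) ≤ -η := by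
  obtain ⟨v, hv, hmin⟩ := isCompact_Icc.exists_isMinOn
    (nonempty_Icc.2 (by linarith : -(1 - ε) ≤ 1 - ε))
    (Real.continuous_sinc.comp (continuous_const_mul Real.pi)).continuousOn
  have hv : 0 < Real.sinc (Real.pi * v) := sinc_pi_mul_pos ((abs_le.2 hv).trans_lt (by linarith))
  have hneg := sinc_pi_mul_one_add_neg hε₀ hε₁
  refine ⟨min (Real.sinc (Real.pi * v)) (-Real.sinc (Real.pi * (1 + ε))),
    lt_min hv (neg_pos.2 hneg), fun u hu => ?_, le_neg_of_le_neg (min_le_right _ _)⟩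
  exact (min_le_left _ _).trans (hmin (abs_le.1 hu))

lemma sinc_pi_mul_sub (a b : ℝ) : Real.sinc (Real.pi * (b - a)) =
    if a = b then 1 else Real.sin (Real.pi * (b - a)) / (Real.pi * (b - a)) := by
  simp [Real.sinc_apply, Real.pi_ne_zero, sub_eq_zero, eq_comm]

end Sinc

section SineApprox

lemma mul_sub_mem_Ioo_of_mem_uIoo {s a b t : ℝ} (hab : 0 < s * (b - a)) (ht : t ∈ uIoo a b) :
    s * (t - a) ∈ Ioo 0 (s * (b - a)) := by
  rcases le_total a b with hle | hle
  · rw [uIoo_of_le hle] at ht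
    have hs : 0 < s := pos_of_mul_pos_left hab (sub_nonneg.2 hle)
    exact ⟨mul_pos hs (sub_pos.2 ht.1), by gcongr; exact ht.2⟩
  · rw [uIoo_of_ge hle] at ht
    have hs : s < 0 := neg_of_mul_pos_left hab (sub_nonpos.2 hle)
    exact ⟨mul_pos_of_neg_of_neg hs (sub_neg.2 ht.2),
      mul_lt_mul_of_neg_left (sub_lt_sub_right ht.1 a) hs⟩

/-- On the window `|s * (t - x₀)| ≤ A` around `x₀`, the kernel `K`, normalized at `x₀` and rescaled
by the density `s`, is `η`-close to the sine kernel. With `a = x₀ + u / s` and `b = x₀ + v / s` this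
is the closeness of `K (x₀ + u / s) (x₀ + v / s) / K x₀ x₀` to `sin (π (v - u)) / (π (v - u))`. -/
def IsSineApprox (K : ℝ → ℝ → ℝ) (x₀ s A η : ℝ) : Prop :=
  ∀ a b, |s * (a - x₀)| ≤ A → |s * (b - x₀)| ≤ A →
    |K a b / K x₀ x₀ - Real.sinc (Real.pi * (s * (b - a)))| < η

namespace IsSineApprox

variable {K : ℝ → ℝ → ℝ} {x₀ s A η ε a b : ℝ}

protected lemma neg (h : IsSineApprox K x₀ s A η) : IsSineApprox K x₀ (-s) A η := by
  intro a b ha hb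
  simp only [neg_mul, abs_neg, mul_neg, Real.sinc_neg] at ha hb ⊢
  exact h a b ha hb

protected lemma abs (h : IsSineApprox K x₀ s A η) : IsSineApprox K x₀ |s| A η := by
  rcases abs_choice s with hs | hs <;> rw [hs]
  exacts [h, h.neg]

lemma lt_abs_of_eq_zero (h : IsSineApprox K x₀ s A η)
    (hη : ∀ u, |u| ≤ 1 - ε → η ≤ Real.sinc (Real.pi * u))
    (ha : |s * (a - x₀)| ≤ A) (hb : |s * (b - x₀)| ≤ A) (hab : K a b = 0) :
    1 - ε < |s * (b - a)| := by
  by_contra! hle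
  have happrox := abs_lt.1 (h a b ha hb)
  rw [hab, zero_div] at happrox
  linarith [hη _ hle]

lemma exists_eq_zero (h : IsSineApprox K x₀ s A η) (hs : s ≠ 0) (hK : K x₀ x₀ ≠ 0)
    (hcont : Continuous (K a)) (hε₀ : 0 < ε) (hε₁ : ε < 1)
    (hη : ∀ u, |u| ≤ 1 - ε → η ≤ Real.sinc (Real.pi * u))
    (hη' : Real.sinc (Real.pi * (1 + ε)) ≤ -η) (ha : |s * (a - x₀)| + 2 ≤ A) :
    ∃ b, |s * (b - a) - 1| < ε ∧ K a b = 0 := by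
  have happrox (u : ℝ) (hu : |u| ≤ 2) :
      |K a (a + u / s) / K x₀ x₀ - Real.sinc (Real.pi * u)| < η := by
    have hsu : s * (a + u / s - a) = u := by field_simp; ring
    have hshift : s * (a + u / s - x₀) = s * (a - x₀) + u := by field_simp; ring
    have := h a (a + u / s) (by linarith) (by rw [hshift]; linarith [abs_add_le (s * (a - x₀)) u])
    rwa [hsu] at this
  have hpos := abs_lt.1 (happrox (1 - ε) (abs_le.2 ⟨by linarith, by linarith⟩))
  have hneg := abs_lt.1 (happrox (1 + ε) (abs_le.2 ⟨by linarith, by linarith⟩))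
  obtain ⟨u, hu, hzero⟩ := intermediate_value_Ioo' (by linarith : 1 - ε ≤ 1 + ε)
    (f := fun u => K a (a + u / s) / K x₀ x₀)
    ((hcont.comp (by fun_prop)).div_const _).continuousOn
    (show (0 : ℝ) ∈ Ioo _ _ from
      ⟨by linarith, by linarith [hη (1 - ε) (abs_of_pos (by linarith)).le]⟩)
  refine ⟨a + u / s, ?_, (div_eq_zero_iff.1 hzero).resolve_right hK⟩
  rw [add_sub_cancel_left, mul_div_cancel₀ _ hs, abs_lt]
  exact ⟨by linarith [hu.1], by linarith [hu.2]⟩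

/-- The zero `b` of `K a` at rescaled distance about `1` is adjacent to `a`: a point of `Z` strictly
between them would have rescaled distance more than `1 - ε ≥ 2 / 3` from both. -/
lemma exists_adjacent {Z : Set ℝ} (hZ : ∀ a ∈ Z, ∀ b, K a b = 0 ↔ b ∈ Z ∧ b ≠ a)
    (h : IsSineApprox K x₀ s A η) (hs : s ≠ 0) (hK : K x₀ x₀ ≠ 0)
    (hcont : Continuous (K a)) (hε₀ : 0 < ε) (hε₁ : ε ≤ 1 / 3)
    (hη : ∀ u, |u| ≤ 1 - ε → η ≤ Real.sinc (Real.pi * u))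
    (hη' : Real.sinc (Real.pi * (1 + ε)) ≤ -η) (haZ : a ∈ Z) (ha : |s * (a - x₀)| + 2 ≤ A) :
    ∃ b ∈ Z, |s * (b - a) - 1| < ε ∧ Disjoint (uIoo a b) Z := by
  obtain ⟨b, hb, hab⟩ := h.exists_eq_zero hs hK hcont hε₀ (by linarith) hη hη' ha
  obtain ⟨hbZ, -⟩ := (hZ a haZ b).1 hab
  refine ⟨b, hbZ, hb, disjoint_left.2 fun t ht htZ => ?_⟩
  obtain ⟨hb₁, hb₂⟩ := abs_lt.1 hb
  obtain ⟨hat, htb⟩ := mul_sub_mem_Ioo_of_mem_uIoo (by linarith : 0 < s * (b - a)) ht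
  have hwindow {c : ℝ} (hc₀ : 0 < s * (c - a)) (hc₂ : s * (c - a) ≤ 2) : |s * (c - x₀)| ≤ A := by
    have hsplit : s * (c - x₀) = s * (a - x₀) + s * (c - a) := by ring
    rw [hsplit]
    linarith [abs_add_le (s * (a - x₀)) (s * (c - a)), abs_of_pos hc₀]
  have htA : |s * (t - x₀)| ≤ A := hwindow hat (by linarith)
  have hta := h.lt_abs_of_eq_zero hη (by linarith) htA
    ((hZ a haZ t).2 ⟨htZ, by rintro rfl; simp at hat⟩)
  have htb' := h.lt_abs_of_eq_zero hη htA (hwindow (by linarith) (by linarith))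
    ((hZ t htZ b).2 ⟨hbZ, by rintro rfl; simp at htb⟩)
  rw [abs_of_pos hat] at hta
  rw [abs_of_pos (by linarith)] at htb'
  linarith

end IsSineApprox

end SineApprox

section Labeling

open Polynomial

/-- The number of real roots of `P` less than `x`. The `j`-th zero relative to `x₀` is the root `y`
with `numRootsLT P y = numRootsLT P x₀ + j`. -/
noncomputable def numRootsLT (P : ℝ[X]) (x : ℝ) : ℕ :=
  {t | P.IsRoot t ∧ t < x}.ncard

variable {P : ℝ[X]} {x₀ x y z : ℝ} {j : ℤ}

lemma numRootsLT_eq_add_ncard (hP : P ≠ 0) (hxy : x ≤ y) :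
    numRootsLT P y = numRootsLT P x + {t | P.IsRoot t ∧ x ≤ t ∧ t < y}.ncard := by
  have hfin {s : Set ℝ} (hs : s ⊆ {t | P.IsRoot t}) : s.Finite :=
    (finite_setOfPred_isRoot hP).subset hs
  rw [numRootsLT, numRootsLT, ← ncard_union_eq _ (hfin fun t ht => ht.1) (hfin fun t ht => ht.1)]
  · congr 1
    ext t
    simp only [mem_union, mem_ofPred_eq]
    grind
  · exact disjoint_left.2 fun t ht ht' => ht'.2.1.not_gt ht.2

lemma numRootsLT_eq_add_one_add_ncard (hP : P ≠ 0) (hy : P.IsRoot y) (hyz : y < z) :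
    numRootsLT P z = numRootsLT P y + 1 + {t | P.IsRoot t ∧ y < t ∧ t < z}.ncard := by
  have hset : {t | P.IsRoot t ∧ y ≤ t ∧ t < z} = insert y {t | P.IsRoot t ∧ y < t ∧ t < z} := by
    ext t
    simp only [mem_insert_iff, mem_ofPred_eq]
    grind
  rw [numRootsLT_eq_add_ncard hP hyz.le, hset, ncard_insert_of_notMem (by simp)
    ((finite_setOfPred_isRoot hP).subset fun t ht => ht.1)]
  ring

lemma isNthZero_iff (hP : P ≠ 0) :
    IsNthZero P x₀ j y ↔ P.IsRoot y ∧ (numRootsLT P y : ℤ) = numRootsLT P x₀ + j := by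
  rw [IsNthZero, and_congr_right_iff]
  intro hy
  rcases le_or_gt x₀ y with hle | hlt
  · have := numRootsLT_eq_add_ncard hP hle
    grind
  · have := numRootsLT_eq_add_one_add_ncard hP hy hlt
    grind

lemma IsNthZero.eq (hP : P ≠ 0) (hy : IsNthZero P x₀ j y) (hz : IsNthZero P x₀ j z) : y = z := by
  rw [isNthZero_iff hP] at hy hz
  have hne {y z : ℝ} (hy : P.IsRoot y) (hyz : y < z) : numRootsLT P y ≠ numRootsLT P z := by
    rw [numRootsLT_eq_add_one_add_ncard hP hy hyz]
    omega
  have heq : numRootsLT P y = numRootsLT P z := by exact_mod_cast hy.2.trans hz.2.symm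
  rcases lt_trichotomy y z with h | h | h
  exacts [absurd heq (hne hy.1 h), h, absurd heq.symm (hne hz.1 h)]

/-- The `j`-th zero of `P` relative to `x₀`, and an unspecified number if there is none. -/
noncomputable def labeledRoot (P : ℝ[X]) (x₀ : ℝ) (j : ℤ) : ℝ :=
  Classical.epsilon (IsNthZero P x₀ j)

lemma IsNthZero.isNthZero_labeledRoot (hy : IsNthZero P x₀ j y) :
    IsNthZero P x₀ j (labeledRoot P x₀ j) :=
  Classical.epsilon_spec ⟨y, hy⟩

lemma IsNthZero.labeledRoot_eq (hP : P ≠ 0) (hy : IsNthZero P x₀ j y) :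
    labeledRoot P x₀ j = y :=
  hy.isNthZero_labeledRoot.eq hP hy

lemma isNthZero_zero_of_isLeast (hP : P ≠ 0) (hy : IsLeast {t | P.IsRoot t ∧ x₀ ≤ t} y) :
    IsNthZero P x₀ 0 y := by
  have hempty : {t | P.IsRoot t ∧ x₀ ≤ t ∧ t < y} = ∅ :=
    eq_empty_of_forall_notMem fun t ht => (hy.2 ⟨ht.1, ht.2.1⟩).not_gt ht.2.2
  rw [isNthZero_iff hP, numRootsLT_eq_add_ncard hP hy.1.2, hempty]
  exact ⟨hy.1.1, by simp⟩

lemma isNthZero_add_one_iff (hP : P ≠ 0) (hy : P.IsRoot y) (hz : P.IsRoot z) (hyz : y < z)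
    (hadj : Disjoint (Ioo y z) {t | P.IsRoot t}) :
    IsNthZero P x₀ (j + 1) z ↔ IsNthZero P x₀ j y := by
  have hempty : {t | P.IsRoot t ∧ y < t ∧ t < z} = ∅ :=
    eq_empty_of_forall_notMem fun t ht => disjoint_left.1 hadj ht.2 ht.1
  have hrank := numRootsLT_eq_add_one_add_ncard hP hy hyz
  rw [hempty, ncard_empty] at hrank
  rw [isNthZero_iff hP, isNthZero_iff hP, and_iff_right hy, and_iff_right hz]
  omega

end Labeling

section Universality

/-- Weak bulk universality of the kernels `K n` at `x₀` with density `s n`: after rescaling by `s n`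
they converge to the sine kernel, uniformly on compact sets. The density may have either sign. -/
structure IsSineUniversal (K : ℕ → ℝ → ℝ → ℝ) (x₀ : ℝ) (s : ℕ → ℝ) : Prop where
  eventually_ne_zero : ∀ᶠ n in atTop, s n ≠ 0
  eventually_isSineApprox :
    ∀ A η : ℝ, 0 < η → ∀ᶠ n in atTop, IsSineApprox (K n) x₀ (s n) A η

namespace IsSineUniversal

section Kernel

variable {K : ℕ → ℝ → ℝ → ℝ} {x₀ : ℝ} {s : ℕ → ℝ}

/-- If `s n = 0`, the rescaled kernel takes the same value at `(0, 0)` and at `(0, 1)`, where the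
sine kernel is `1` and `0`. -/
theorem of_tendstoUniformlyOn
    (h : ∀ A : ℝ, 0 < A → TendstoUniformlyOn
      (fun n ab => K n (x₀ + ab.1 / s n) (x₀ + ab.2 / s n) / K n x₀ x₀)
      (fun ab => Real.sinc (Real.pi * (ab.2 - ab.1))) atTop (Icc (-A) A ×ˢ Icc (-A) A)) :
    IsSineUniversal K x₀ s := by
  have happrox (A η : ℝ) (hA : 0 < A) (hη : 0 < η) : ∀ᶠ n in atTop, ∀ u v, |u| ≤ A → |v| ≤ A →
      |K n (x₀ + u / s n) (x₀ + v / s n) / K n x₀ x₀ - Real.sinc (Real.pi * (v - u))| < η := by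
    filter_upwards [Metric.tendstoUniformlyOn_iff.1 (h A hA) η hη] with n hn u v hu hv
    rw [← Real.dist_eq, dist_comm]
    exact hn (u, v) ⟨abs_le.1 hu, abs_le.1 hv⟩
  have hne : ∀ᶠ n in atTop, s n ≠ 0 := by
    filter_upwards [happrox 1 (1 / 2) one_pos one_half_pos] with n hn hs
    have h₀ := abs_lt.1 (hn 0 0 (by simp) (by simp))
    have h₁ := abs_lt.1 (hn 0 1 (by simp) (by simp))
    simp only [hs, div_zero, sub_zero, mul_zero, mul_one, Real.sinc_zero,
      Real.sinc_of_ne_zero Real.pi_ne_zero, Real.sin_pi, zero_div] at h₀ h₁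
    linarith
  refine ⟨hne, fun A η hη => ?_⟩
  filter_upwards [hne, happrox (max A 1) η (by positivity) hη] with n hs hn a b ha hb
  have h := hn _ _ (ha.trans (le_max_left A 1)) (hb.trans (le_max_left A 1))
  rwa [mul_div_cancel_left₀ _ hs, mul_div_cancel_left₀ _ hs, add_sub_cancel, add_sub_cancel,
    ← mul_sub, sub_sub_sub_cancel_right] at h

protected lemma neg (h : IsSineUniversal K x₀ s) : IsSineUniversal K x₀ (fun n => -s n) :=
  ⟨h.eventually_ne_zero.mono fun _ => neg_ne_zero.2,
    fun A η hη => (h.eventually_isSineApprox A η hη).mono fun _ => IsSineApprox.neg⟩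

protected lemma abs (h : IsSineUniversal K x₀ s) : IsSineUniversal K x₀ (fun n => |s n|) :=
  ⟨h.eventually_ne_zero.mono fun _ => abs_ne_zero.2,
    fun A η hη => (h.eventually_isSineApprox A η hη).mono fun _ => IsSineApprox.abs⟩

theorem eventually_exists_adjacent {Z : ℕ → Set ℝ}
    (h : IsSineUniversal K x₀ s) (hK : ∀ n, K n x₀ x₀ ≠ 0) (hcont : ∀ n a, Continuous (K n a))
    (hZ : ∀ n, ∀ a ∈ Z n, ∀ b, K n a b = 0 ↔ b ∈ Z n ∧ b ≠ a) (M : ℝ) {ε : ℝ} (hε : 0 < ε) :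
    ∀ᶠ n in atTop, ∀ a ∈ Z n, |s n * (a - x₀)| ≤ M →
      ∃ b ∈ Z n, 0 < s n * (b - a) ∧ |s n * (b - a) - 1| < ε ∧ Disjoint (uIoo a b) (Z n) := by
  have hδ : 0 < min ε (1 / 3) := by positivity
  have hδ₃ : min ε (1 / 3) ≤ 1 / 3 := min_le_right _ _
  obtain ⟨η, hη₀, hη, hη'⟩ := exists_sinc_gap hδ (by linarith)
  filter_upwards [h.eventually_ne_zero, h.eventually_isSineApprox (M + 2) η hη₀]
    with n hs happrox a ha haM
  obtain ⟨b, hb, hab, hadj⟩ := happrox.exists_adjacent (hZ n) hs (hK n) (hcont n a) hδ hδ₃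
    hη hη' ha (by linarith)
  exact ⟨b, hb, by linarith [abs_lt.1 hab], hab.trans_le (min_le_left _ _), hadj⟩

end Kernel

section Zeros

open Polynomial

variable {L : ℝ[X] →ₗ[ℝ] ℝ} {S : Sequence ℝ} {x₀ : ℝ} {s : ℕ → ℝ}

theorem eventually_exists_adjacent_root (hu : IsSineUniversal (CDKernel S) x₀ s)
    (hS : IsOrthonormalSequence L S) (M : ℝ) {ε : ℝ} (hε : 0 < ε) :
    ∀ᶠ n in atTop, ∀ a, (S n).IsRoot a → |s n * (a - x₀)| ≤ M →
      ∃ b, (S n).IsRoot b ∧ 0 < s n * (b - a) ∧ |s n * (b - a) - 1| < ε ∧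
        Disjoint (uIoo a b) {t | (S n).IsRoot t} :=
  hu.eventually_exists_adjacent (fun n => (CDKernel_self_pos S n x₀).ne') (continuous_CDKernel S)
    (fun _ _ ha => hS.CDKernel_eq_zero_iff ha) M hε

theorem eventually_exists_isNthZero_add_one (hu : IsSineUniversal (CDKernel S) x₀ s)
    (hS : IsOrthonormalSequence L S) (hs : ∀ᶠ n in atTop, 0 < s n) (M : ℝ) {ε : ℝ} (hε : 0 < ε) :
    ∀ᶠ n in atTop, ∀ j a, IsNthZero (S n) x₀ j a → |s n * (a - x₀)| ≤ M →
      ∃ b, IsNthZero (S n) x₀ (j + 1) b ∧ |s n * (b - a) - 1| < ε := by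
  filter_upwards [hs, hu.eventually_exists_adjacent_root hS M hε] with n hsn hn j a ha haM
  obtain ⟨b, hb, hpos, hab, hadj⟩ := hn a ha.1 haM
  have hlt : a < b := sub_pos.1 (pos_of_mul_pos_right hpos hsn.le)
  rw [uIoo_of_lt hlt] at hadj
  exact ⟨b, (isNthZero_add_one_iff (S.ne_zero n) ha.1 hb hlt hadj).2 ha, hab⟩

theorem eventually_exists_isNthZero_sub_one (hu : IsSineUniversal (CDKernel S) x₀ s)
    (hS : IsOrthonormalSequence L S) (hs : ∀ᶠ n in atTop, 0 < s n) (M : ℝ) {ε : ℝ} (hε : 0 < ε) :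
    ∀ᶠ n in atTop, ∀ j a, IsNthZero (S n) x₀ j a → |s n * (a - x₀)| ≤ M →
      ∃ b, IsNthZero (S n) x₀ (j - 1) b ∧ |s n * (a - b) - 1| < ε := by
  filter_upwards [hs, hu.neg.eventually_exists_adjacent_root hS M hε] with n hsn hn j a ha haM
  obtain ⟨b, hb, hpos, hab, hadj⟩ := hn a ha.1 (by rwa [neg_mul, abs_neg])
  rw [neg_mul_comm, neg_sub] at hpos hab
  have hlt : b < a := sub_pos.1 (pos_of_mul_pos_right hpos hsn.le)
  rw [uIoo_of_gt hlt] at hadj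
  refine ⟨b, (isNthZero_add_one_iff (S.ne_zero n) hb ha.1 hlt hadj).1 ?_, hab⟩
  rwa [sub_add_cancel]

theorem eventually_exists_isNthZero_zero (hu : IsSineUniversal (CDKernel S) x₀ s)
    (hS : IsOrthonormalSequence L S) (hs : ∀ᶠ n in atTop, 0 < s n) :
    ∀ᶠ n in atTop, ∃ y, IsNthZero (S n) x₀ 0 y ∧ |s n * (y - x₀)| ≤ 2 := by
  obtain ⟨η, hη₀, hη, hη'⟩ := exists_sinc_gap one_half_pos one_half_lt_one
  filter_upwards [hs, hu.eventually_isSineApprox 2 η hη₀] with n hsn happrox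
  obtain ⟨b, hb, hzero⟩ := happrox.exists_eq_zero hsn.ne' (CDKernel_self_pos S n x₀).ne'
    (continuous_CDKernel S n x₀) one_half_pos one_half_lt_one hη hη' (by simp)
  obtain ⟨hb₁, hb₂⟩ := abs_lt.1 hb
  have hlt : x₀ < b := sub_pos.1 (pos_of_mul_pos_right (by linarith) hsn.le)
  obtain ⟨z, ⟨hxz, hzb⟩, hz⟩ := hS.exists_isRoot_of_CDKernel_eq_zero hlt hzero
  obtain ⟨y, hy⟩ : ∃ y, IsLeast {t | (S n).IsRoot t ∧ x₀ ≤ t} y :=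
    exists_min_image _ id ((finite_setOfPred_isRoot (S.ne_zero n)).subset fun t ht => ht.1)
      ⟨z, hz, hxz⟩
  refine ⟨y, isNthZero_zero_of_isLeast (S.ne_zero n) hy, ?_⟩
  rw [abs_of_nonneg (mul_nonneg hsn.le (sub_nonneg.2 hy.1.2))]
  calc s n * (y - x₀) ≤ s n * (b - x₀) := by
        gcongr
        exact (hy.2 ⟨hz, hxz⟩).trans hzb
    _ ≤ 2 := by linarith

theorem exists_eventually_isNthZero_abs_le (hu : IsSineUniversal (CDKernel S) x₀ s)
    (hS : IsOrthonormalSequence L S) (hs : ∀ᶠ n in atTop, 0 < s n) (j : ℤ) :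
    ∃ C, ∀ᶠ n in atTop, ∃ y, IsNthZero (S n) x₀ j y ∧ |s n * (y - x₀)| ≤ C := by
  induction j using Int.induction_on with
  | zero => exact ⟨2, hu.eventually_exists_isNthZero_zero hS hs⟩
  | succ i ih =>
    obtain ⟨C, hC⟩ := ih
    refine ⟨C + 2, ?_⟩
    filter_upwards [hC, hu.eventually_exists_isNthZero_add_one hS hs C one_pos]
      with n ⟨a, ha, haC⟩ hn
    obtain ⟨b, hb, hab⟩ := hn i a ha haC
    refine ⟨b, hb, ?_⟩
    rw [abs_lt] at hab
    rw [abs_le] at haC ⊢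
    constructor <;> linarith
  | pred i ih =>
    obtain ⟨C, hC⟩ := ih
    refine ⟨C + 2, ?_⟩
    filter_upwards [hC, hu.eventually_exists_isNthZero_sub_one hS hs C one_pos]
      with n ⟨a, ha, haC⟩ hn
    obtain ⟨b, hb, hab⟩ := hn (-i) a ha haC
    refine ⟨b, hb, ?_⟩
    rw [abs_lt] at hab
    rw [abs_le] at haC ⊢
    constructor <;> linarith

theorem eventually_isNthZero_labeledRoot (hu : IsSineUniversal (CDKernel S) x₀ s)
    (hS : IsOrthonormalSequence L S) (hs : ∀ᶠ n in atTop, 0 < s n) (j : ℤ) :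
    ∀ᶠ n in atTop, IsNthZero (S n) x₀ j (labeledRoot (S n) x₀ j) := by
  obtain ⟨C, hC⟩ := hu.exists_eventually_isNthZero_abs_le hS hs j
  exact hC.mono fun n ⟨y, hy, _⟩ => hy.isNthZero_labeledRoot

theorem tendsto_mul_labeledRoot_sub (hu : IsSineUniversal (CDKernel S) x₀ s)
    (hS : IsOrthonormalSequence L S) (hs : ∀ᶠ n in atTop, 0 < s n) (j : ℤ) :
    Tendsto (fun n => s n * (labeledRoot (S n) x₀ (j + 1) - labeledRoot (S n) x₀ j))
      atTop (nhds 1) := by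
  obtain ⟨C, hC⟩ := hu.exists_eventually_isNthZero_abs_le hS hs j
  refine Metric.tendsto_nhds.2 fun ε hε => ?_
  filter_upwards [hC, hu.eventually_exists_isNthZero_add_one hS hs C hε] with n ⟨a, ha, haC⟩ hn
  obtain ⟨b, hb, hab⟩ := hn j a ha haC
  rwa [hb.labeledRoot_eq (S.ne_zero n), ha.labeledRoot_eq (S.ne_zero n), Real.dist_eq]

theorem tendsto_labeledRoot_sub_div (hu : IsSineUniversal (CDKernel S) x₀ s)
    (hS : IsOrthonormalSequence L S) (hs : ∀ᶠ n in atTop, 0 < s n) (j : ℤ) :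
    Tendsto (fun n => (labeledRoot (S n) x₀ (j + 1) - labeledRoot (S n) x₀ j) /
      (labeledRoot (S n) x₀ 1 - labeledRoot (S n) x₀ 0)) atTop (nhds 1) := by
  have hlim := (hu.tendsto_mul_labeledRoot_sub hS hs j).div
    (hu.tendsto_mul_labeledRoot_sub hS hs 0) one_ne_zero
  rw [div_one] at hlim
  exact hlim.congr' (hs.mono fun n hn => mul_div_mul_left _ _ hn.ne')

end Zeros

end IsSineUniversal

end Universality

section Moments

open Polynomial

variable {μ : Measure ℝ}

/-- The linear functional `q ↦ ∫ q dμ` of a measure with finite moments. -/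
noncomputable def momentFunctional (μ : Measure ℝ)
    (hint : ∀ q : ℝ[X], Integrable (fun x => q.eval x) μ) : ℝ[X] →ₗ[ℝ] ℝ where
  toFun q := ∫ x, q.eval x ∂μ
  map_add' q r := by simp only [eval_add, integral_add (hint q) (hint r)]
  map_smul' c q := by simp only [eval_smul, integral_smul, RingHom.id_apply]

/-- The integral of a non-integrable function is `0`, so the normalization puts every `S n` in
`L²`. -/
lemma integrable_eval_of_integral_mul_eq {S : Sequence ℝ}
    (horth : ∀ n m, ∫ x, (S n).eval x * (S m).eval x ∂μ = if n = m then 1 else 0) (q : ℝ[X]) :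
    Integrable (fun x => q.eval x) μ := by
  have hL2 (n : ℕ) : MemLp (fun x => (S n).eval x) 2 μ := by
    rw [memLp_two_iff_integrable_sq (S n).continuous.aestronglyMeasurable]
    refine not_imp_comm.1 integral_undef ?_
    simp [sq, horth]
  obtain ⟨d, hd⟩ := natDegree_eq_zero.1 (S.natDegree_eq 0)
  have hd₀ : d ≠ 0 := fun h => S.ne_zero 0 (by rw [← hd, h, C_0])
  have hq : q ∈ Submodule.span ℝ (range S) := by
    rw [S.span fun n => (leadingCoeff_ne_zero.2 (S.ne_zero n)).isUnit]
    exact Submodule.mem_top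
  induction hq using Submodule.span_induction with
  | mem q hq =>
    obtain ⟨n, rfl⟩ := hq
    have hmul := (hL2 n).integrable_mul (hL2 0)
    rw [← hd] at hmul
    simpa [hd₀, Pi.mul_def] using hmul.mul_const d⁻¹
  | zero => simp
  | add q r _ _ hq hr =>
    exact (hq.add hr).congr (.of_forall fun x => by simp only [eval_add, Pi.add_apply])
  | smul c q _ hq =>
    exact (hq.smul c).congr (.of_forall fun x => by simp only [eval_smul, Pi.smul_apply])

end Moments

theorem stmt_2_general {μ : Measure ℝ} {p : ℕ → Polynomial ℝ}
    (hdeg : ∀ n, (p n).natDegree = n)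
    (horth : ∀ n m, ∫ x, (p n).eval x * (p m).eval x ∂μ = if n = m then 1 else 0)
    {x₀ : ℝ} {s : ℕ → ℝ}
    (huniv : ∀ A : ℝ, 0 < A → TendstoUniformlyOn
      (fun n ab => CDKernel p n (x₀ + ab.1 / s n) (x₀ + ab.2 / s n) / CDKernel p n x₀ x₀)
      (fun ab => Real.sinc (Real.pi * (ab.2 - ab.1))) atTop (Icc (-A) A ×ˢ Icc (-A) A))
    (j : ℤ) :
    ∃ (N : ℕ) (X : ℕ → ℤ → ℝ),
      (∀ n, N ≤ n →
        IsNthZero (p n) x₀ j (X n j) ∧ IsNthZero (p n) x₀ (j + 1) (X n (j + 1)) ∧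
        IsNthZero (p n) x₀ 0 (X n 0) ∧ IsNthZero (p n) x₀ 1 (X n 1)) ∧
      Tendsto (fun n => (X n (j + 1) - X n j) / (X n 1 - X n 0)) atTop (nhds 1) := by
  have hp (n : ℕ) : p n ≠ 0 := fun h => by simpa [h] using horth n n
  let S : Polynomial.Sequence ℝ :=
    ⟨p, fun n => by rw [Polynomial.degree_eq_natDegree (hp n), hdeg]⟩
  have hS : IsOrthonormalSequence
      (momentFunctional μ (integrable_eval_of_integral_mul_eq (S := S) horth)) S :=
    fun n m => by simpa only [momentFunctional, LinearMap.coe_mk, AddHom.coe_mk,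
      Polynomial.eval_mul] using horth n m
  have hu : IsSineUniversal (CDKernel S) x₀ s := .of_tendstoUniformlyOn huniv
  have hs : ∀ᶠ n in atTop, 0 < |s n| := hu.eventually_ne_zero.mono fun _ => abs_pos.2
  have hzero (i : ℤ) := hu.abs.eventually_isNthZero_labeledRoot hS hs i
  obtain ⟨N, hN⟩ := eventually_atTop.1
    ((hzero j).and ((hzero (j + 1)).and ((hzero 0).and (hzero 1))))
  exact ⟨N, fun n => labeledRoot (p n) x₀, hN, hu.abs.tendsto_labeledRoot_sub_div hS hs j⟩

/-- **Weak Freud–Levin Theorem** (Theorem 1.2 of Avila–Last–Simon).  Let `μ` be a probability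
measure on `ℝ` with compact infinite support, `p_n` its orthonormal polynomials, `K_n` the CD
kernel, `w = dμ/dx`.  Suppose `x₀ ∈ supp(μ)` is not isolated from the support on either side,
`w(x₀) > 0`, the zeros of `p_n` are real and simple, `ρ_n = (1/n) w(x₀) K_n(x₀,x₀)` satisfies
`0 < inf ρ_n ≤ sup ρ_n < ∞`, and weak bulk universality holds at `x₀`.  Then quasi-clock
behavior holds at `x₀`: for each `j ∈ ℤ`, the zeros `x_j^{(n)}` (labeled relative to `x₀`) are
defined for large `n` and `(x_{j+1}^{(n)} - x_j^{(n)})/(x_1^{(n)} - x_0^{(n)}) → 1`. -/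
theorem stmt_2
    (μ : Measure ℝ) [IsProbabilityMeasure μ]
    (hsupp_cpt : IsCompact (measSupport μ)) (hsupp_inf : (measSupport μ).Infinite)
    (p : ℕ → Polynomial ℝ)
    (hdeg : ∀ n : ℕ, (p n).natDegree = n)
    (hlead : ∀ n : ℕ, 0 < (p n).leadingCoeff)
    (horth : ∀ n m : ℕ, (∫ x, (p n).eval x * (p m).eval x ∂μ) = if n = m then 1 else 0)
    (hzeros : ∀ n : ℕ, 1 ≤ n → Multiset.card (p n).roots = n ∧ (p n).roots.Nodup)
    (w : ℝ → ℝ) (hw : w = fun x => (μ.rnDeriv volume x).toReal)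
    (x₀ : ℝ) (hx₀supp : x₀ ∈ measSupport μ)
    (hacc : ∀ δ : ℝ, 0 < δ →
      (Ioo (x₀ - δ) x₀ ∩ measSupport μ).Nonempty ∧ (Ioo x₀ (x₀ + δ) ∩ measSupport μ).Nonempty)
    (hwx₀ : 0 < w x₀)
    (ρ : ℕ → ℝ) (hρ : ρ = fun n : ℕ => (1 / n : ℝ) * w x₀ * CDKernel p n x₀ x₀)
    (hρbound : ∃ c Cu : ℝ, 0 < c ∧ ∀ n : ℕ, 1 ≤ n → c ≤ ρ n ∧ ρ n ≤ Cu)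
    (huniv : ∀ A : ℝ, 0 < A →
      TendstoUniformlyOn
        (fun (n : ℕ) (ab : ℝ × ℝ) =>
          CDKernel p n (x₀ + ab.1 / (n * ρ n)) (x₀ + ab.2 / (n * ρ n)) / CDKernel p n x₀ x₀)
        (fun ab => if ab.1 = ab.2 then 1
          else Real.sin (Real.pi * (ab.2 - ab.1)) / (Real.pi * (ab.2 - ab.1)))
        atTop (Icc (-A) A ×ˢ Icc (-A) A)) :
    ∀ j : ℤ, ∃ (N : ℕ) (X : ℕ → ℤ → ℝ),
      (∀ n : ℕ, N ≤ n →
        IsNthZero (p n) x₀ j (X n j) ∧ IsNthZero (p n) x₀ (j + 1) (X n (j + 1)) ∧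
        IsNthZero (p n) x₀ 0 (X n 0) ∧ IsNthZero (p n) x₀ 1 (X n 1)) ∧
      Tendsto (fun n : ℕ => (X n (j + 1) - X n j) / (X n 1 - X n 0)) atTop (nhds 1) :=
  stmt_2_general hdeg horth (by simpa only [sinc_pi_mul_sub] using huniv)
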